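/- arXiv:1506.07721 — 2 statements merged into one kernel-verified Lean document; each statement's English description precedes it below -/
import Mathlib

section
/- Define U_{φ,n}(f) = (1/n) Σ_{i=1}^n ∂φ(r*(V_i, f(X_i)))·r*(V_i, f(X_i)) − (1/(n(n−1))) Σ_{1 ≤ i ≠ j ≤ n} ∂φ(r*(V_i, f(X_j))). If ∂φ(r*(V, f(X)))·r*(V, f(X)) and ∂φ(r*(V', f(X))) are integrable (where (V', X') is an independent copy of (V, X)), then E[U_{φ,n}(f)] = 0; in particular E[∂φ(r*(V, f(X)))·r*(V, f(X))] = E[∂φ(r*(V', f(X)))]. -/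
/-!
The identity behind the theorem is a change of measure: by definition of `r*`,
`∫ h dP_idep = ∫ h · r* dP_joint` for every measurable `h`, and `h = ∂φ ∘ r*` gives the
equality of the two expectations (`integral_joint_eq_integral_indep`). Under the product measure
each diagonal summand of the U-statistic is distributed as a function of one draw, and each
off-diagonal summand as a function of two independent draws (`measurePreserving_eval_pair`). By
linearity the expectation is the difference of the two equal expectations. Integrability of the
summands is what licenses splitting the integral.
-/

open MeasureTheory Set

/-- Two distinct coordinates of an i.i.d. sample are jointly distributed as `μ ⊗ μ`. -/
theorem measurePreserving_eval_pair {ι α : Type*} [Fintype ι] [MeasurableSpace α]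
    (μ : Measure α) [IsProbabilityMeasure μ] {i j : ι} (hij : i ≠ j) :
    MeasurePreserving (fun ω : ι → α => (ω i, ω j)) (Measure.pi fun _ => μ) (μ.prod μ) := by
  refine ⟨by fun_prop, ?_⟩
  have h : ProbabilityTheory.iIndepFun (fun (i : ι) (ω : ι → α) => ω i)
      (Measure.pi fun _ => μ) :=
    ProbabilityTheory.iIndepFun_pi (X := fun _ => id) fun _ => aemeasurable_id
  rw [(ProbabilityTheory.indepFun_iff_map_prod_eq_prod_map_map
    (measurable_pi_apply i).aemeasurable (measurable_pi_apply j).aemeasurable).1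
    (h.indepFun hij)]
  congr 1
  · exact (measurePreserving_eval (fun _ : ι => μ) i).map_eq
  · exact (measurePreserving_eval (fun _ : ι => μ) j).map_eq

/-- Change of measure: integrating `h` against the product of the marginals is integrating `h · r`
against the joint law, when `r` is the density of the former with respect to the latter. -/
theorem integral_joint_eq_integral_indep
    {X V Y : Type*} [MeasurableSpace X] [MeasurableSpace V] [MeasurableSpace Y]
    (μ : Measure X) [IsProbabilityMeasure μ]
    {view : X → V} {f : X → Y} (hview : Measurable view) (hf : Measurable f)
    {r : V × Y → ℝ} (hr : Measurable r) (hr0 : ∀ p, 0 ≤ r p)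
    (hrn : ((μ.map view).prod (μ.map f))
        = (μ.map (fun x => (view x, f x))).withDensity (fun p => ENNReal.ofReal (r p)))
    {h : V × Y → ℝ} (hh : Measurable h) :
    ∫ x, h (view x, f x) * r (view x, f x) ∂μ
      = ∫ p : X × X, h (view p.2, f p.1) ∂(μ.prod μ) := by
  have e1 : ∫ p : X × X, h (view p.2, f p.1) ∂(μ.prod μ)
      = ∫ q, h q ∂((μ.map view).prod (μ.map f)) := by
    rw [Measure.map_prod_map μ μ hview hf,
      integral_map (by fun_prop) hh.aestronglyMeasurable]
    exact integral_prod_swap (μ := μ) (ν := μ) (fun q : X × X => h (view q.1, f q.2))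
  rw [e1, hrn, integral_withDensity_eq_integral_toReal_smul (by fun_prop)
    (by simp), integral_map (by fun_prop) (by fun_prop)]
  refine integral_congr_ae (.of_forall fun x => ?_)
  simp [ENNReal.toReal_ofReal (hr0 _), mul_comm]

/-- **The U-statistic `U_{φ,n}(f)` has zero expectation.**
With `U_{φ,n}(f) = (1/n) Σ_i ∂φ(r*(V_i, f(X_i)))·r*(V_i, f(X_i))
− (1/(n(n−1))) Σ_{i ≠ j} ∂φ(r*(V_i, f(X_j)))`, if the relevant integrability
conditions hold then `E[U_{φ,n}(f)] = 0`; in particular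
`E[∂φ(r*(V, f(X)))·r*(V, f(X))] = E[∂φ(r*(V', f(X)))]` for an independent copy
`(V', X')` of `(V, X)`. -/
theorem u_statistic_zero_mean
    {Xsp Vsp Ysp : Type*} [MeasurableSpace Xsp] [MeasurableSpace Vsp] [MeasurableSpace Ysp]
    (μ : Measure Xsp) [IsProbabilityMeasure μ]
    (view : Xsp → Vsp) (f : Xsp → Ysp) (hview : Measurable view) (hf : Measurable f)
    -- `r*` is the Radon–Nikodym derivative of `P_idep` w.r.t. `P_joint`
    (rstar : Vsp × Ysp → ℝ) (hrstar : Measurable rstar) (hrstar0 : ∀ p, 0 ≤ rstar p)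
    (hrn : ((μ.map view).prod (μ.map f))
        = (μ.map (fun x => (view x, f x))).withDensity (fun p => ENNReal.ofReal (rstar p)))
    -- `φ` is convex, lower semicontinuous, `φ(1) = 0`, `0 ∈ ∂φ(1)`, and
    -- `dφ` is a measurable selection of subgradients of `φ`
    (φ dφ : ℝ → ℝ)
    (hφconv : ConvexOn ℝ (Ioi (0 : ℝ)) φ)
    (hφlsc : LowerSemicontinuousOn φ (Ioi (0 : ℝ)))
    (hφ1 : φ 1 = 0)
    (hφzero_subdiff : ∀ v ∈ Ioi (0 : ℝ), 0 ≤ φ v)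
    (hdφ : ∀ u ∈ Ioi (0 : ℝ), ∀ v ∈ Ioi (0 : ℝ), φ u + dφ u * (v - u) ≤ φ v)
    (hdφmeas : Measurable dφ)
    (n : ℕ) (hn : 2 ≤ n)
    (hint1 : Integrable (fun x => dφ (rstar (view x, f x)) * rstar (view x, f x)) μ)
    (hint2 : Integrable (fun p : Xsp × Xsp => dφ (rstar (view p.2, f p.1))) (μ.prod μ)) :
    (∫ ω : Fin n → Xsp,
        ((1 / (n : ℝ)) * ∑ i : Fin n,
            dφ (rstar (view (ω i), f (ω i))) * rstar (view (ω i), f (ω i))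
          - (1 / ((n : ℝ) * ((n : ℝ) - 1))) * ∑ i : Fin n, ∑ j ∈ Finset.univ.erase i,
              dφ (rstar (view (ω i), f (ω j))))
        ∂(Measure.pi fun _ : Fin n => μ)) = 0
    ∧ (∫ x, dφ (rstar (view x, f x)) * rstar (view x, f x) ∂μ)
        = ∫ p : Xsp × Xsp, dφ (rstar (view p.2, f p.1)) ∂(μ.prod μ) := by
  have key := integral_joint_eq_integral_indep μ hview hf hrstar hrstar0 hrn
    (hdφmeas.comp hrstar)
  simp only [Function.comp_apply] at key
  refine ⟨?_, key⟩
  have mp1 (i : Fin n) : MeasurePreserving (fun ω : Fin n → Xsp => ω i)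
      (Measure.pi fun _ => μ) μ := measurePreserving_eval (fun _ : Fin n => μ) i
  have I1 (i : Fin n) : Integrable (fun ω : Fin n → Xsp =>
      dφ (rstar (view (ω i), f (ω i))) * rstar (view (ω i), f (ω i)))
      (Measure.pi fun _ => μ) := (mp1 i).integrable_comp_of_integrable hint1
  have E1 (i : Fin n) : ∫ ω : Fin n → Xsp,
      dφ (rstar (view (ω i), f (ω i))) * rstar (view (ω i), f (ω i)) ∂(Measure.pi fun _ => μ)
      = ∫ p : Xsp × Xsp, dφ (rstar (view p.2, f p.1)) ∂(μ.prod μ) := by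
    rw [← key]
    conv_rhs => rw [← (mp1 i).map_eq]
    rw [integral_map (mp1 i).aemeasurable (by rw [(mp1 i).map_eq]; exact hint1.1)]
  have I2 (i : Fin n) : ∀ j ∈ Finset.univ.erase i, Integrable (fun ω : Fin n → Xsp =>
      dφ (rstar (view (ω i), f (ω j)))) (Measure.pi fun _ => μ) := fun j hj =>
    (measurePreserving_eval_pair μ (Finset.ne_of_mem_erase hj)).integrable_comp_of_integrable
      hint2
  have E2 (i : Fin n) : ∀ j ∈ Finset.univ.erase i, ∫ ω : Fin n → Xsp,
      dφ (rstar (view (ω i), f (ω j))) ∂(Measure.pi fun _ => μ)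
      = ∫ p : Xsp × Xsp, dφ (rstar (view p.2, f p.1)) ∂(μ.prod μ) := fun j hj => by
    have mp2 := measurePreserving_eval_pair μ (Finset.ne_of_mem_erase hj)
    rw [← mp2.map_eq, integral_map mp2.aemeasurable (by rw [mp2.map_eq]; exact hint2.1)]
  have hn0 : (n : ℝ) ≠ 0 := by positivity
  have hn1 : (n : ℝ) - 1 ≠ 0 := by
    have : (2 : ℝ) ≤ n := by exact_mod_cast hn
    linarith
  rw [integral_sub ((integrable_finsetSum _ fun i _ => I1 i).const_mul _)
      ((integrable_finsetSum _ fun i _ => integrable_finsetSum _ (I2 i)).const_mul _),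
    integral_const_mul, integral_const_mul, integral_finsetSum _ fun i _ => I1 i,
    integral_finsetSum _ fun i _ => integrable_finsetSum _ (I2 i),
    Finset.sum_congr rfl fun i _ => E1 i,
    Finset.sum_congr rfl fun i _ => (integral_finsetSum _ (I2 i)).trans
      (Finset.sum_congr rfl (E2 i))]
  simp only [Finset.sum_const, Finset.card_erase_of_mem (Finset.mem_univ _), Finset.card_univ,
    Fintype.card_fin, nsmul_eq_mul, Nat.cast_sub (show 1 ≤ n by omega), Nat.cast_one]
  field_simp
  ring
end

section
/- Fix a measurable function g : V-space × Y-space → ℝ and a nonnegative measurable function r on V-space × Y-space such that g is P_idep-integrable and r·g is P_joint-integrable. Then the U-statistic (1/(n(n−1))) Σ_{1 ≤ i ≠ j ≤ n} [g(V_i, f(X_j)) − r(V_i, f(X_i)) g(V_i, f(X_i))] is an unbiased estimator: its expectation over the i.i.d. samples equals ∫ g dP_idep − ∫ r·g dP_joint. -/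
/-!
Linearity of the integral reduces the claim to single summands. For `i ≠ j` the coordinates `ω i` and
`ω j` are independent under the product measure, so `(view (ω i), f (ω j))` has law
`(μ.map view).prod (μ.map f)`, while `(view (ω i), f (ω i))` has the joint law. Hence each of the
`n (n - 1)` summands is integrable and has expectation `∫ g dP_idep - ∫ r g dP_joint`, and the prefactor
`1 / (n (n - 1))` cancels their number, which is nonzero since `n ≥ 2`.
-/

open MeasureTheory Set

/-- Functions of two distinct coordinates are independent under a product measure, so their joint law
is the product of their marginal laws. -/
lemma measurePreserving_pi_pair {ι X V Y : Type*} [Fintype ι]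
    [MeasurableSpace X] [MeasurableSpace V] [MeasurableSpace Y]
    (μ : Measure X) [IsProbabilityMeasure μ]
    {u : X → V} {f : X → Y} (hu : Measurable u) (hf : Measurable f) {i j : ι} (hij : i ≠ j) :
    MeasurePreserving (fun ω : ι → X => (u (ω i), f (ω j)))
      (Measure.pi fun _ : ι => μ) ((μ.map u).prod (μ.map f)) := by
  have hcoord : ProbabilityTheory.iIndepFun (fun (k : ι) (ω : ι → X) => ω k)
      (Measure.pi fun _ : ι => μ) :=
    ProbabilityTheory.iIndepFun_pi (X := fun _ (x : X) => x) fun _ => aemeasurable_id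
  have hind := (hcoord.indepFun hij).comp hu hf
  have hui : Measurable (fun ω : ι → X => u (ω i)) := hu.comp (measurable_pi_apply i)
  have hfj : Measurable (fun ω : ι → X => f (ω j)) := hf.comp (measurable_pi_apply j)
  refine ⟨hui.prodMk hfj, ?_⟩
  have hlaw := (ProbabilityTheory.indepFun_iff_map_prod_eq_prod_map_map
    hui.aemeasurable hfj.aemeasurable).1 hind
  have hmu : MeasurePreserving u μ (μ.map u) := hu.measurePreserving μ
  have hmf : MeasurePreserving f μ (μ.map f) := hf.measurePreserving μ
  have hi := (hmu.comp (measurePreserving_eval (fun _ : ι => μ) i)).map_eq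
  have hj := (hmf.comp (measurePreserving_eval (fun _ : ι => μ) j)).map_eq
  rw [hlaw]
  exact congrArg₂ Measure.prod hi hj

/-- **Unbiasedness of the empirical MMD U-statistic.**
For fixed measurable `g` and a nonnegative measurable ratio function `r`, the U-statistic
`(1/(n(n−1))) Σ_{i ≠ j} [g(V_i, f(X_j)) − r(V_i, f(X_i)) g(V_i, f(X_i))]` has expectation
`∫ g dP_idep − ∫ r·g dP_joint` over the i.i.d. samples. -/
theorem mmd_u_statistic_unbiased
    {Xsp Vsp Ysp : Type*} [MeasurableSpace Xsp] [MeasurableSpace Vsp] [MeasurableSpace Ysp]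
    (μ : Measure Xsp) [IsProbabilityMeasure μ]
    (view : Xsp → Vsp) (f : Xsp → Ysp) (hview : Measurable view) (hf : Measurable f)
    (g r : Vsp × Ysp → ℝ) (hg : Measurable g) (hr : Measurable r) (hr0 : ∀ p, 0 ≤ r p)
    (hgint : Integrable g ((μ.map view).prod (μ.map f)))
    (hrgint : Integrable (fun p => r p * g p) (μ.map (fun x => (view x, f x))))
    (n : ℕ) (hn : 2 ≤ n) :
    (∫ ω : Fin n → Xsp,
        (1 / ((n : ℝ) * ((n : ℝ) - 1))) * ∑ i : Fin n, ∑ j ∈ Finset.univ.erase i,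
          (g (view (ω i), f (ω j)) - r (view (ω i), f (ω i)) * g (view (ω i), f (ω i)))
        ∂(Measure.pi fun _ : Fin n => μ))
      = (∫ p, g p ∂((μ.map view).prod (μ.map f)))
        - ∫ p, r p * g p ∂(μ.map (fun x => (view x, f x))) := by
  set P := Measure.pi fun _ : Fin n => μ
  have hjoint : ∀ i : Fin n, MeasurePreserving (fun ω : Fin n → Xsp => (view (ω i), f (ω i))) P
      (μ.map fun x => (view x, f x)) := fun i =>
    ((hview.prodMk hf).measurePreserving μ).comp (measurePreserving_eval (fun _ : Fin n => μ) i)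
  have hI₁ : ∀ i j : Fin n, i ≠ j → Integrable (fun ω => g (view (ω i), f (ω j))) P := fun i j hij =>
    (measurePreserving_pi_pair μ hview hf hij).integrable_comp_of_integrable hgint
  have hE₁ : ∀ i j : Fin n, i ≠ j → ∫ ω, g (view (ω i), f (ω j)) ∂P
      = ∫ p, g p ∂((μ.map view).prod (μ.map f)) := fun i j hij => by
    have h := measurePreserving_pi_pair μ hview hf hij
    rw [← h.map_eq, integral_map h.aemeasurable hg.aestronglyMeasurable]
  have hI₂ : ∀ i : Fin n, Integrable
      (fun ω => r (view (ω i), f (ω i)) * g (view (ω i), f (ω i))) P := fun i =>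
    (hjoint i).integrable_comp_of_integrable hrgint
  have hE₂ : ∀ i : Fin n, ∫ ω, r (view (ω i), f (ω i)) * g (view (ω i), f (ω i)) ∂P
      = ∫ p, r p * g p ∂(μ.map fun x => (view x, f x)) := fun i => by
    rw [← (hjoint i).map_eq,
      integral_map (f := fun p => r p * g p) (hjoint i).aemeasurable
        (hr.mul hg).aestronglyMeasurable]
  have hI : ∀ i, ∀ j ∈ Finset.univ.erase i, Integrable (fun ω : Fin n → Xsp =>
      g (view (ω i), f (ω j)) - r (view (ω i), f (ω i)) * g (view (ω i), f (ω i))) P :=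
    fun i j hj => (hI₁ i j (Finset.ne_of_mem_erase hj).symm).sub (hI₂ i)
  rw [integral_const_mul, integral_finsetSum _ fun i _ => integrable_finsetSum _ (hI i)]
  have hterm : ∀ i : Fin n, ∫ ω, ∑ j ∈ Finset.univ.erase i,
      (g (view (ω i), f (ω j)) - r (view (ω i), f (ω i)) * g (view (ω i), f (ω i))) ∂P
      = ((n : ℝ) - 1) * ((∫ p, g p ∂((μ.map view).prod (μ.map f)))
        - ∫ p, r p * g p ∂(μ.map (fun x => (view x, f x)))) := fun i => by
    rw [integral_finsetSum _ (hI i), Finset.sum_congr rfl fun j hj => by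
      have hij := (Finset.ne_of_mem_erase hj).symm
      rw [integral_sub (hI₁ i j hij) (hI₂ i), hE₁ i j hij, hE₂ i]]
    rw [Finset.sum_const, Finset.card_erase_of_mem (Finset.mem_univ i), Finset.card_univ,
      Fintype.card_fin, nsmul_eq_mul, Nat.cast_sub (by omega), Nat.cast_one]
  rw [Finset.sum_congr rfl fun i _ => hterm i, Finset.sum_const, Finset.card_univ,
    Fintype.card_fin, nsmul_eq_mul]
  have hn2 : (2 : ℝ) ≤ n := by exact_mod_cast hn
  have hn0 : (n : ℝ) ≠ 0 := by linarith
  have hn1 : (n : ℝ) - 1 ≠ 0 := by linarith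
  field_simp
end
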